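/- Let b ∈ (0,1], η > 0, and θ ∈ (0,1), and let n be an integer with n ≥ (2/θ)·(4η/b² + 1). Let V be a set of size n and let μ be a totally-connected probability distribution on [q]^V that is b-marginally bounded and η-spectrally independent. Then μ satisfies the ⌈θn⌉-uniform block factorization of entropy with constant C = (2/θ)^{4η/b² + 1}. -/

import Mathlib

/-!
# Uniform block factorization of entropy from spectral independence

For a vertex set `Λ` put `G(Λ) = E[f log E[f | σ_Λ]]` (`logMean`). By the chain rule for entropy,
`avgEnt μ S f = G(V) - G(Sᶜ)` and `entropy μ f = G(V) - G(∅)` (`avgEnt_eq`, `entropy_eq`), so the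
claim concerns only the averages `H k` of `G` over vertex sets of size `k` (`levelMean`).

*Local contraction* (`local_contraction`). Fix `Λ` and write `x_u = E[f | σ_{Λ ∪ u}] / E[f | σ_Λ]`.
The inequality `log t ≥ 1 - 1 / t` bounds the mixed difference
`G(Λ ∪ {u, v}) - G(Λ ∪ u) - G(Λ ∪ v) + G(Λ)` from below by minus the covariance of `x_u` and `x_v`
under the law tilted by `E[f | σ_Λ]`. Given `σ_Λ`, the density `x_u` is a function of the spin at
`u` with mean one, so spectral independence bounds the sum of these covariances over `u ≠ v` by `η`
times the sum of the variances of the `x_u` (`cov_le`): the influence matrix is self-adjoint for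
the marginal weights, so its eigenvalues control its quadratic form. Finally `x_u ≤ 1 / b` by
marginal boundedness, and on `[0, 1 / b]` one has `(b² / 4) (x - 1)² ≤ x log x - x + 1`
(`sq_le_mul_log`); hence the variance of `x_u` is at most `4 / b²` times the entropy
`G(Λ ∪ u) - G(Λ)` (`logMean_insert`).

*From local to global.* Averaging over `Λ` of size `k` gives, with `R = 4η / b²`,
`(n - k - 1) (H (k+2) - 2 H (k+1) + H k) ≥ -R (H (k+1) - H k)` (`levelMean_step`). With
`A N = H n - H (n - N)`, the average of `avgEnt μ S f` over `|S| = N`, this reads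
`N (A N - A (N-1)) ≥ (N - R) (A (N+1) - A N)`. By induction `N (A N - A (N-1)) ≤ (R + 1) A N`,
that is `A (N-1) ≥ (1 - (R + 1) / N) A N`, and multiplying these with Bernoulli's inequality gives
`A n ≤ ((n - R) / (ℓ - R)) ^ (R + 1) A ℓ ≤ (2 / θ) ^ (R + 1) A ℓ` as soon as `ℓ ≥ θ n` and
`ℓ ≥ 2 (R + 1)` (`growth_bound`). Since `ℓ / n ≤ 1`, this is stronger than the theorem.
-/

open Finset

attribute [local instance] Classical.propDecidable

noncomputable section

variable {V : Type} [Fintype V] [DecidableEq V] {q : ℕ}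

/-- Probability that a sample from `μ` agrees with `τ` on `Λ`. -/
def prAgree (μ : (V → Fin q) → ℝ) (Λ : Finset V) (τ : V → Fin q) : ℝ :=
  ∑ σ : V → Fin q, if ∀ v ∈ Λ, σ v = τ v then μ σ else 0

/-- Conditional probability that `σ v = i` given that `σ` agrees with `τ` on `Λ`. -/
def condProb (μ : (V → Fin q) → ℝ) (Λ : Finset V) (τ : V → Fin q) (v : V) (i : Fin q) : ℝ :=
  prAgree μ (insert v Λ) (Function.update τ v i) / prAgree μ Λ τ

/-- `μ` is `b`-marginally bounded: conditioned on any feasible boundary condition on a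
proper subset `Λ` of the vertices, every feasible spin at any unassigned vertex has
conditional probability at least `b`. -/
def MarginallyBounded (μ : (V → Fin q) → ℝ) (b : ℝ) : Prop :=
  ∀ Λ : Finset V, Λ ≠ Finset.univ → ∀ τ : V → Fin q, 0 < prAgree μ Λ τ →
    ∀ v ∉ Λ, ∀ i : Fin q, 0 < condProb μ Λ τ v i → b ≤ condProb μ Λ τ v i

/-- The index set of the influence matrix: pairs `(u,i)` with `u` unassigned and
spin `i` feasible at `u` given the boundary condition. -/
abbrev InfIdx (μ : (V → Fin q) → ℝ) (Λ : Finset V) (τ : V → Fin q) : Type :=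
  {p : V × Fin q // p.1 ∉ Λ ∧ 0 < condProb μ Λ τ p.1 p.2}

/-- The influence matrix `Ψ^τ`. -/
def inflMatrix (μ : (V → Fin q) → ℝ) (Λ : Finset V) (τ : V → Fin q) :
    Matrix (InfIdx μ Λ τ) (InfIdx μ Λ τ) ℝ :=
  Matrix.of fun p r =>
    if p.1.1 = r.1.1 then 0
    else condProb μ (insert p.1.1 Λ) (Function.update τ p.1.1 p.1.2) r.1.1 r.1.2
      - condProb μ Λ τ r.1.1 r.1.2

/-- `μ` is `η`-spectrally independent: every real eigenvalue of every influence matrix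
`Ψ^τ` is at most `η`. -/
def SpectrallyIndependent (μ : (V → Fin q) → ℝ) (η : ℝ) : Prop :=
  ∀ Λ : Finset V, Λ ≠ Finset.univ → ∀ τ : V → Fin q, 0 < prAgree μ Λ τ →
    ∀ (t : ℝ) (x : InfIdx μ Λ τ → ℝ), x ≠ 0 →
      (inflMatrix μ Λ τ).mulVec x = t • x → t ≤ η

/-- Two configurations are adjacent in the Hamming graph iff they differ at exactly one
vertex. -/
def HammingAdj (σ σ' : V → Fin q) : Prop := ∃! v : V, σ v ≠ σ' v

/-- `μ` is totally-connected: for every nonempty `S ⊆ V` and feasible boundary condition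
`τ` on `V∖S`, the set of feasible configurations given `τ` is connected in the Hamming
graph (moving only through feasible configurations). -/
def TotallyConnected (μ : (V → Fin q) → ℝ) : Prop :=
  ∀ S : Finset V, S.Nonempty → ∀ τ : V → Fin q, 0 < prAgree μ Sᶜ τ →
    ∀ σ σ' : V → Fin q,
      0 < μ σ → (∀ v ∈ Sᶜ, σ v = τ v) →
      0 < μ σ' → (∀ v ∈ Sᶜ, σ' v = τ v) →
      Relation.ReflTransGen
        (fun a b => HammingAdj a b ∧ 0 < μ b ∧ ∀ v ∈ Sᶜ, b v = τ v) σ σ'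

/-- Expectation of `f` under `π`. -/
def expec (π f : (V → Fin q) → ℝ) : ℝ := ∑ σ, π σ * f σ

/-- Entropy `Ent_π(f) = π(f·log(f/π(f)))` (with the conventions `0·log 0 = 0` and
`log 0 = 0`, so that the entropy vanishes when `π(f) = 0`). -/
def entropy (π f : (V → Fin q) → ℝ) : ℝ :=
  ∑ σ, π σ * f σ * Real.log (f σ / expec π f)

/-- Conditional distribution `μ_S^τ` on configurations agreeing with `τ` outside `S`. -/
def condDist (μ : (V → Fin q) → ℝ) (S : Finset V) (τ : V → Fin q) : (V → Fin q) → ℝ :=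
  fun σ => (if ∀ v ∈ Sᶜ, σ v = τ v then μ σ else 0) / prAgree μ Sᶜ τ

/-- `μ[Ent_S(f)]`: the average over the boundary condition (distributed according to `μ`)
of the conditional entropy of `f` on `S`. -/
def avgEnt (μ : (V → Fin q) → ℝ) (S : Finset V) (f : (V → Fin q) → ℝ) : ℝ :=
  ∑ τ : V → Fin q, μ τ * entropy (condDist μ S τ) f

/-- `μ` satisfies approximate tensorization of entropy with constant `C₁`. -/
def ApproxTensorization (μ : (V → Fin q) → ℝ) (C₁ : ℝ) : Prop :=
  ∀ f : (V → Fin q) → ℝ, (∀ σ, 0 ≤ f σ) →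
    entropy μ f ≤ C₁ * ∑ v : V, avgEnt μ {v} f

/-- `μ` satisfies `ℓ`-uniform block factorization of entropy with constant `C`. -/
def UniformBlockFactorization (μ : (V → Fin q) → ℝ) (ℓ : ℕ) (C : ℝ) : Prop :=
  ∀ f : (V → Fin q) → ℝ, (∀ σ, 0 ≤ f σ) →
    ((ℓ : ℝ) / (Fintype.card V : ℝ)) * entropy μ f ≤
      C * ((Fintype.card V).choose ℓ : ℝ)⁻¹ *
        ∑ S ∈ Finset.powersetCard ℓ (Finset.univ : Finset V), avgEnt μ S f

/-- `μ` is a probability distribution. -/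
def IsProbDist (μ : (V → Fin q) → ℝ) : Prop := (∀ σ, 0 ≤ μ σ) ∧ ∑ σ, μ σ = 1

/-- Unnormalized Gibbs weight of a `q`-spin system with symmetric interaction matrix `A`
and external field `h`. -/
def gibbsWeight (G : SimpleGraph V) [DecidableRel G.Adj]
    (A : Fin q → Fin q → ℝ) (hA : ∀ i j, A i j = A j i) (h : Fin q → ℝ)
    (σ : V → Fin q) : ℝ :=
  (∏ e ∈ G.edgeFinset,
      Sym2.lift ⟨fun u v => A (σ u) (σ v), fun u v => hA (σ u) (σ v)⟩ e) *
    ∏ v : V, h (σ v)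

/-- The Glauber dynamics transition matrix for `μ`. -/
def glauberMatrix (μ : (V → Fin q) → ℝ) : Matrix (V → Fin q) (V → Fin q) ℝ :=
  Matrix.of fun σ σ' =>
    (Fintype.card V : ℝ)⁻¹ *
      ∑ v : V, if ∀ u, u ≠ v → σ' u = σ u then
        μ σ' / ∑ j : Fin q, μ (Function.update σ v j) else 0

/-- Dirichlet form of the Glauber dynamics. -/
def glauberDirichlet (μ : (V → Fin q) → ℝ) (f g : (V → Fin q) → ℝ) : ℝ :=
  (1 / 2) * ∑ σ, ∑ σ', μ σ * glauberMatrix μ σ σ' * (f σ - f σ') * (g σ - g σ')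

/-- Kullback–Leibler divergence. -/
def klDiv (ν μ : (V → Fin q) → ℝ) : ℝ := ∑ σ, ν σ * Real.log (ν σ / μ σ)

end

/-! ### Conditional means and the chain rule for entropy -/

section Basic

variable {V : Type} [Fintype V] [DecidableEq V] {q : ℕ}

/-- Conditional expectation of `f` given that the configuration agrees with `τ` on `Λ`. -/
noncomputable def condMean (μ f : (V → Fin q) → ℝ) (Λ : Finset V) (τ : V → Fin q) : ℝ :=
  prAgree (fun σ => μ σ * f σ) Λ τ / prAgree μ Λ τ

/-- `E[f · log E[f | σ_Λ]]`, which by the tower property is the unnormalized entropy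
`E[φ(E[f | σ_Λ])]` with `φ x = x log x`. -/
noncomputable def logMean (μ f : (V → Fin q) → ℝ) (Λ : Finset V) : ℝ :=
  ∑ σ, μ σ * f σ * Real.log (condMean μ f Λ σ)

lemma prAgree_congr (w : (V → Fin q) → ℝ) {Λ : Finset V} {τ τ' : V → Fin q}
    (h : ∀ v ∈ Λ, τ v = τ' v) : prAgree w Λ τ = prAgree w Λ τ' := by
  unfold prAgree
  refine Finset.sum_congr rfl fun σ _ => ?_
  have : (∀ v ∈ Λ, σ v = τ v) ↔ (∀ v ∈ Λ, σ v = τ' v) :=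
    forall₂_congr fun v hv => by rw [h v hv]
  simp only [this]

lemma condMean_congr (μ f : (V → Fin q) → ℝ) {Λ : Finset V} {τ τ' : V → Fin q}
    (h : ∀ v ∈ Λ, τ v = τ' v) : condMean μ f Λ τ = condMean μ f Λ τ' := by
  simp only [condMean, prAgree_congr _ h]

lemma prAgree_nonneg {w : (V → Fin q) → ℝ} (hw : ∀ σ, 0 ≤ w σ) (Λ : Finset V)
    (τ : V → Fin q) : 0 ≤ prAgree w Λ τ :=
  Finset.sum_nonneg fun σ _ => by split_ifs <;> simp [hw]

lemma le_prAgree {w : (V → Fin q) → ℝ} (hw : ∀ σ, 0 ≤ w σ) (Λ : Finset V)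
    (τ : V → Fin q) : w τ ≤ prAgree w Λ τ := by
  have := Finset.single_le_sum (f := fun σ => if ∀ v ∈ Λ, σ v = τ v then w σ else 0)
    (fun σ _ => by split_ifs <;> simp [hw]) (Finset.mem_univ τ)
  simpa [prAgree] using this

lemma prAgree_anti {w : (V → Fin q) → ℝ} (hw : ∀ σ, 0 ≤ w σ) {Λ Λ' : Finset V}
    (h : Λ ⊆ Λ') (τ : V → Fin q) : prAgree w Λ' τ ≤ prAgree w Λ τ := by
  refine Finset.sum_le_sum fun σ _ => ?_
  by_cases h1 : ∀ v ∈ Λ', σ v = τ v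
  · rw [if_pos h1, if_pos fun v hv => h1 v (h hv)]
  · rw [if_neg h1]; split_ifs <;> simp [hw]

lemma prAgree_univ (w : (V → Fin q) → ℝ) (τ : V → Fin q) :
    prAgree w Finset.univ τ = w τ := by
  rw [prAgree, Finset.sum_eq_single τ (fun σ _ hσ => ?_) (by simp), if_pos fun _ _ => rfl]
  exact if_neg fun h => hσ (funext fun v => h v (Finset.mem_univ v))

lemma condMean_nonneg {μ f : (V → Fin q) → ℝ} (hμ : ∀ σ, 0 ≤ μ σ) (hf : ∀ σ, 0 ≤ f σ)
    (Λ : Finset V) (τ : V → Fin q) : 0 ≤ condMean μ f Λ τ :=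
  div_nonneg (prAgree_nonneg (fun σ => mul_nonneg (hμ σ) (hf σ)) _ _) (prAgree_nonneg hμ _ _)

lemma condMean_pos {μ f : (V → Fin q) → ℝ} (hμ : ∀ σ, 0 ≤ μ σ) (hf : ∀ σ, 0 ≤ f σ)
    (Λ : Finset V) {τ : V → Fin q} (h1 : 0 < μ τ) (h2 : 0 < f τ) : 0 < condMean μ f Λ τ :=
  div_pos ((mul_pos h1 h2).trans_le
      (le_prAgree (w := fun σ => μ σ * f σ) (fun σ => mul_nonneg (hμ σ) (hf σ)) _ _))
    (h1.trans_le (le_prAgree hμ _ _))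

/-- Tower property: against a function of `σ_Λ`, the function `f` may be replaced by its
conditional expectation given `σ_Λ`. -/
lemma sum_condMean {μ : (V → Fin q) → ℝ} (hμ : ∀ σ, 0 ≤ μ σ) (f : (V → Fin q) → ℝ)
    (Λ : Finset V) (h : (V → Fin q) → ℝ)
    (hh : ∀ σ τ : V → Fin q, (∀ v ∈ Λ, σ v = τ v) → h σ = h τ) :
    ∑ σ, μ σ * condMean μ f Λ σ * h σ = ∑ σ, μ σ * f σ * h σ := by
  have e1 : ∀ σ, μ σ * condMean μ f Λ σ * h σ =
      ∑ ρ, if ∀ v ∈ Λ, ρ v = σ v then μ σ * (μ ρ * f ρ * h ρ / prAgree μ Λ ρ) else 0 := by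
    intro σ
    rw [condMean, prAgree, mul_div_assoc', Finset.mul_sum, Finset.sum_div, Finset.sum_mul]
    refine Finset.sum_congr rfl fun ρ _ => ?_
    split_ifs with hc
    · rw [hh ρ σ hc, prAgree_congr μ hc]; ring
    · simp
  simp_rw [e1]
  rw [Finset.sum_comm]
  refine Finset.sum_congr rfl fun ρ _ => ?_
  have e2 : ∀ σ, (if ∀ v ∈ Λ, ρ v = σ v then μ σ * (μ ρ * f ρ * h ρ / prAgree μ Λ ρ) else 0)
      = (if ∀ v ∈ Λ, σ v = ρ v then μ σ else 0) * (μ ρ * f ρ * h ρ / prAgree μ Λ ρ) := by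
    intro σ
    have : (∀ v ∈ Λ, ρ v = σ v) ↔ (∀ v ∈ Λ, σ v = ρ v) :=
      forall₂_congr fun v _ => eq_comm
    simp only [this]
    split_ifs <;> simp
  simp_rw [e2]
  rw [← Finset.sum_mul]
  change prAgree μ Λ ρ * _ = _
  rcases (hμ ρ).eq_or_lt with h0 | h0
  · simp [← h0]
  · have := (h0.trans_le (le_prAgree hμ Λ ρ)).ne'
    field_simp

lemma expec_condDist (μ f : (V → Fin q) → ℝ) (S : Finset V) (τ : V → Fin q) :
    expec (condDist μ S τ) f = condMean μ f Sᶜ τ := by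
  simp only [expec, condDist, condMean, prAgree, Finset.sum_div]
  refine Finset.sum_congr rfl fun σ _ => ?_
  split_ifs <;> simp [mul_div_right_comm]

lemma logMean_univ {μ f : (V → Fin q) → ℝ} (hμ : ∀ σ, 0 ≤ μ σ) :
    logMean μ f Finset.univ = ∑ σ, μ σ * f σ * Real.log (f σ) := by
  refine Finset.sum_congr rfl fun σ _ => ?_
  rcases (hμ σ).eq_or_lt with h0 | h0
  · simp [← h0]
  · rw [condMean, prAgree_univ, prAgree_univ, mul_div_cancel_left₀ _ h0.ne']

/-- Chain rule: the averaged conditional entropy on `S` is a difference of two terms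
`logMean`. -/
lemma avgEnt_eq {μ f : (V → Fin q) → ℝ} (hμ : ∀ σ, 0 ≤ μ σ) (hf : ∀ σ, 0 ≤ f σ)
    (S : Finset V) : avgEnt μ S f = logMean μ f Finset.univ - logMean μ f Sᶜ := by
  have e0 : avgEnt μ S f = ∑ τ, μ τ *
      condMean μ (fun σ => f σ * Real.log (f σ / condMean μ f Sᶜ σ)) Sᶜ τ * 1 := by
    refine Finset.sum_congr rfl fun τ _ => ?_
    rw [mul_one]
    congr 1
    rw [← expec_condDist, entropy, expec_condDist]
    simp only [expec]
    refine Finset.sum_congr rfl fun σ _ => ?_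
    by_cases hc : ∀ v ∈ Sᶜ, σ v = τ v
    · rw [condMean_congr μ f hc, mul_assoc]
    · simp only [condDist, if_neg hc]; simp
  rw [e0, sum_condMean hμ _ _ _ (fun _ _ _ => rfl), logMean_univ hμ, logMean,
    ← Finset.sum_sub_distrib]
  refine Finset.sum_congr rfl fun σ _ => ?_
  rcases (hμ σ).eq_or_lt with h0 | h0
  · simp [← h0]
  rcases (hf σ).eq_or_lt with h1 | h1
  · simp [← h1]
  rw [Real.log_div h1.ne' (condMean_pos hμ hf _ h0 h1).ne']
  ring

lemma entropy_eq {μ f : (V → Fin q) → ℝ} (hμ : IsProbDist μ) (hf : ∀ σ, 0 ≤ f σ) :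
    entropy μ f = logMean μ f Finset.univ - logMean μ f ∅ := by
  have hm : ∀ σ, condMean μ f ∅ σ = expec μ f := fun σ => by
    simp [condMean, prAgree, hμ.2, expec]
  rw [logMean_univ hμ.1, logMean, ← Finset.sum_sub_distrib, entropy]
  refine Finset.sum_congr rfl fun σ _ => ?_
  rcases (hμ.1 σ).eq_or_lt with h0 | h0
  · simp [← h0]
  rcases (hf σ).eq_or_lt with h1 | h1
  · simp [← h1]
  have := condMean_pos hμ.1 hf ∅ h0 h1
  rw [hm] at this ⊢
  rw [Real.log_div h1.ne' this.ne']
  ring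

end Basic

/-! ### Spectral independence as a covariance bound -/

section Spectral

/-- If `M` is self-adjoint for the positive weights `P` and all its real eigenvalues are at most
`η`, then its quadratic form is at most `η` times the weighted square norm. -/
lemma quad_form_le {I : Type} [Fintype I] (P : I → ℝ) (hP : ∀ p, 0 < P p) (M : Matrix I I ℝ)
    (hsym : ∀ p r, P p * M p r = P r * M r p) (η : ℝ)
    (hη : ∀ (t : ℝ) (x : I → ℝ), x ≠ 0 → M.mulVec x = t • x → t ≤ η) (y : I → ℝ) :
    ∑ p, ∑ r, P p * M p r * (y p * y r) ≤ η * ∑ p, P p * y p ^ 2 := by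
  have hs : ∀ p, 0 < √(P p) := fun p => Real.sqrt_pos.2 (hP p)
  have hss : ∀ p, √(P p) * √(P p) = P p := fun p => Real.mul_self_sqrt (hP p).le
  -- Conjugating by `√P` makes `M` symmetric and keeps its eigenvalues.
  let B : Matrix I I ℝ := η • (1 : Matrix I I ℝ) - Matrix.of fun p r => √(P p) * M p r / √(P r)
  have hBap : ∀ (z : I → ℝ) (p : I),
      B.mulVec z p = η * z p - √(P p) * M.mulVec (fun r => z r / √(P r)) p := by
    intro z p
    simp only [B, Matrix.sub_mulVec, Matrix.smul_mulVec, Matrix.one_mulVec, Pi.sub_apply,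
      Pi.smul_apply, smul_eq_mul]
    congr 1
    simp only [Matrix.mulVec, dotProduct, Matrix.of_apply, Finset.mul_sum]
    exact Finset.sum_congr rfl fun r _ => by ring
  have hB : B.IsHermitian := by
    ext p r
    simp only [B, Matrix.conjTranspose_apply, Matrix.sub_apply, Matrix.smul_apply,
      Matrix.of_apply, star_trivial, Matrix.one_apply, eq_comm (a := r) (b := p)]
    congr 1
    rw [div_eq_div_iff (hs p).ne' (hs r).ne']
    linear_combination M r p * hss r - M p r * hss p - hsym p r
  have hpsd : B.PosSemidef := by
    rw [hB.posSemidef_iff_eigenvalues_nonneg]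
    intro k
    have hk := hB.mulVec_eigenvectorBasis k
    set w : I → ℝ := ⇑(hB.eigenvectorBasis k) with hw
    have hw0 : w ≠ 0 := by
      intro h
      have h1 := hB.eigenvectorBasis.orthonormal.ne_zero k
      apply h1
      ext p
      exact congrFun h p
    have := hη (η - hB.eigenvalues k) (fun r => w r / √(P r)) (fun h => hw0 ?_) ?_
    · simpa using this
    · ext p
      have := congrFun h p
      simpa [(hs p).ne'] using this
    · ext p
      have h1 := congrFun hk p
      rw [hBap] at h1
      simp only [Pi.smul_apply, smul_eq_mul] at h1 ⊢
      have := (hs p).ne'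
      field_simp
      linarith
  have h := hpsd.dotProduct_mulVec_nonneg (fun p => √(P p) * y p)
  have e : star (fun p => √(P p) * y p) ⬝ᵥ B.mulVec (fun p => √(P p) * y p) =
      η * ∑ p, P p * y p ^ 2 - ∑ p, ∑ r, P p * M p r * (y p * y r) := by
    simp only [dotProduct, hBap, Pi.star_apply, star_trivial]
    rw [Finset.mul_sum, ← Finset.sum_sub_distrib]
    refine Finset.sum_congr rfl fun p _ => ?_
    have e1 : M.mulVec (fun r => √(P r) * y r / √(P r)) p = ∑ r, M p r * y r := by
      simp only [Matrix.mulVec, dotProduct]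
      exact Finset.sum_congr rfl fun r _ => by rw [mul_div_cancel_left₀ _ (hs r).ne']
    have e2 : ∑ r, P p * M p r * (y p * y r) = P p * y p * ∑ r, M p r * y r := by
      rw [Finset.mul_sum]
      exact Finset.sum_congr rfl fun r _ => by ring
    rw [e1, e2]
    linear_combination (η * y p ^ 2 - y p * ∑ r, M p r * y r) * hss p
  rw [e] at h
  linarith

variable {V : Type} [Fintype V] [DecidableEq V] {q : ℕ}

lemma prAgree_insert (μ : (V → Fin q) → ℝ) {Λ : Finset V} (τ : V → Fin q) {u : V}
    (hu : u ∉ Λ) (i : Fin q) :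
    prAgree μ (insert u Λ) (Function.update τ u i) =
      ∑ σ, if σ u = i then (if ∀ v ∈ Λ, σ v = τ v then μ σ else 0) else 0 := by
  refine Finset.sum_congr rfl fun σ _ => ?_
  have : (∀ v ∈ insert u Λ, σ v = Function.update τ u i v) ↔
      (σ u = i ∧ ∀ v ∈ Λ, σ v = τ v) := by
    rw [Finset.forall_mem_insert, Function.update_self]
    refine and_congr_right fun _ => forall₂_congr fun v hv => ?_
    rw [Function.update_of_ne (fun h : v = u => hu (h ▸ hv))]
  simp only [this, ite_and]

/-- Summing over the feasible vertex-spin pairs `(u, i)` with the event `σ u = i` amounts to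
summing over the free vertices. -/
lemma sum_infIdx {μ : (V → Fin q) → ℝ} (hμ : ∀ σ, 0 ≤ μ σ) (Λ : Finset V) (τ : V → Fin q)
    (hτ : 0 < prAgree μ Λ τ) (K : V → Fin q → (V → Fin q) → ℝ) :
    ∑ p : InfIdx μ Λ τ, ∑ σ, (if σ p.1.1 = p.1.2 then
        (if ∀ v ∈ Λ, σ v = τ v then μ σ else 0) * K p.1.1 p.1.2 σ else 0) =
      ∑ u ∈ Λᶜ, ∑ σ, (if ∀ v ∈ Λ, σ v = τ v then μ σ else 0) * K u (σ u) σ := by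
  rw [Finset.sum_comm, Finset.sum_comm (s := Λᶜ)]
  refine Finset.sum_congr rfl fun σ _ => ?_
  set m : ℝ := if ∀ v ∈ Λ, σ v = τ v then μ σ else 0 with hm
  by_cases h0 : m = 0
  · simp [h0]
  have hin : ∀ u ∈ Λᶜ, 0 < condProb μ Λ τ u (σ u) := by
    intro u hu
    refine div_pos ?_ hτ
    have hc : ∀ v ∈ Λ, σ v = τ v := by
      by_contra hc
      exact h0 (if_neg hc)
    rw [hm, if_pos hc] at h0
    have h1 : 0 < μ σ := lt_of_le_of_ne (hμ σ) (Ne.symm h0)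
    refine h1.trans_le ((le_prAgree hμ (insert u Λ) σ).trans_eq (prAgree_congr μ ?_))
    intro v hv
    by_cases hvu : v = u
    · subst hvu; simp
    · rw [Function.update_of_ne hvu, hc v (Finset.mem_of_mem_insert_of_ne hv hvu)]
  refine Finset.sum_bij_ne_zero (fun p _ _ => p.1.1) ?_ ?_ ?_ ?_
  · rintro ⟨⟨u, i⟩, hu, hi⟩ _ _
    simpa using hu
  · rintro ⟨⟨u, i⟩, hu, hi⟩ _ h1 ⟨⟨v, j⟩, hv, hj⟩ _ h2 h
    have e1 : σ u = i := by by_contra hh; exact h1 (if_neg hh)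
    have e2 : σ v = j := by by_contra hh; exact h2 (if_neg hh)
    simp only at h
    subst h
    simp [← e1, ← e2]
  · intro u hu hne
    exact ⟨⟨(u, σ u), by simpa using hu, hin u hu⟩, Finset.mem_univ _, by simpa using hne, rfl⟩
  · rintro ⟨⟨u, i⟩, hu, hi⟩ _ h1
    have e1 : σ u = i := by by_contra hh; exact h1 (if_neg hh)
    simp [e1]

/-- Spectral independence as a covariance bound: given `σ_Λ = τ`, the sum of the covariances of
centered one-vertex observables is at most `η` times the sum of their variances. -/
lemma cov_le {μ : (V → Fin q) → ℝ} (hμ : ∀ σ, 0 ≤ μ σ) {η : ℝ}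
    (hsi : SpectrallyIndependent μ η) (Λ : Finset V) (hΛ : Λ ≠ univ) (τ : V → Fin q)
    (hτ : 0 < prAgree μ Λ τ) (y : V → Fin q → ℝ)
    (hy : ∀ u ∈ Λᶜ, ∑ σ, (if ∀ v ∈ Λ, σ v = τ v then μ σ else 0) * y u (σ u) = 0) :
    ∑ u ∈ Λᶜ, ∑ v ∈ (insert u Λ)ᶜ, ∑ σ,
        (if ∀ v ∈ Λ, σ v = τ v then μ σ else 0) * (y u (σ u) * y v (σ v)) ≤
      η * ∑ u ∈ Λᶜ, ∑ σ, (if ∀ v ∈ Λ, σ v = τ v then μ σ else 0) * y u (σ u) ^ 2 := by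
  set m : (V → Fin q) → ℝ := fun σ => if ∀ v ∈ Λ, σ v = τ v then μ σ else 0 with hm
  set Z := prAgree μ Λ τ with hZ
  have hP : ∀ p : InfIdx μ Λ τ, condProb μ Λ τ p.1.1 p.1.2 * Z =
      ∑ σ, if σ p.1.1 = p.1.2 then m σ else 0 := by
    intro p
    rw [condProb, div_mul_cancel₀ _ hτ.ne', prAgree_insert μ τ p.2.1]
  have hJ : ∀ p r : InfIdx μ Λ τ, p.1.1 ≠ r.1.1 →
      condProb μ Λ τ p.1.1 p.1.2 * Z *
        condProb μ (insert p.1.1 Λ) (Function.update τ p.1.1 p.1.2) r.1.1 r.1.2 =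
      ∑ σ, if σ p.1.1 = p.1.2 then (if σ r.1.1 = r.1.2 then m σ else 0) else 0 := by
    intro p r hpr
    have hne : prAgree μ (insert p.1.1 Λ) (Function.update τ p.1.1 p.1.2) ≠ 0 := by
      intro h
      have := p.2.2
      rw [condProb, h, zero_div] at this
      exact lt_irrefl _ this
    have hr : r.1.1 ∉ insert p.1.1 Λ := by
      simp [Finset.mem_insert, Ne.symm hpr, r.2.1]
    rw [condProb, div_mul_cancel₀ _ hτ.ne', condProb, mul_div_cancel₀ _ hne,
      prAgree_insert μ _ hr]
    refine Finset.sum_congr rfl fun σ _ => ?_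
    have : (∀ v ∈ insert p.1.1 Λ, σ v = Function.update τ p.1.1 p.1.2 v) ↔
        (σ p.1.1 = p.1.2 ∧ ∀ v ∈ Λ, σ v = τ v) := by
      rw [Finset.forall_mem_insert, Function.update_self]
      refine and_congr_right fun _ => forall₂_congr fun v hv => ?_
      rw [Function.update_of_ne (fun h : v = p.1.1 => p.2.1 (h ▸ hv))]
    simp only [this, ite_and, hm]
    split_ifs <;> rfl
  have hPM : ∀ p r : InfIdx μ Λ τ,
      condProb μ Λ τ p.1.1 p.1.2 * Z * inflMatrix μ Λ τ p r =
      if p.1.1 = r.1.1 then 0 else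
        (∑ σ, if σ p.1.1 = p.1.2 then (if σ r.1.1 = r.1.2 then m σ else 0) else 0) -
        condProb μ Λ τ p.1.1 p.1.2 * Z * condProb μ Λ τ r.1.1 r.1.2 := by
    intro p r
    simp only [inflMatrix, Matrix.of_apply]
    split_ifs with h
    · simp
    · rw [mul_sub, hJ p r h]
  have hq := quad_form_le (fun p : InfIdx μ Λ τ => condProb μ Λ τ p.1.1 p.1.2 * Z)
    (fun p => mul_pos p.2.2 hτ) (inflMatrix μ Λ τ) ?_ η (hsi Λ hΛ τ hτ)
    (fun p => y p.1.1 p.1.2)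
  · have eR : ∑ p : InfIdx μ Λ τ, condProb μ Λ τ p.1.1 p.1.2 * Z * y p.1.1 p.1.2 ^ 2 =
        ∑ u ∈ Λᶜ, ∑ σ, m σ * y u (σ u) ^ 2 := by
      rw [← sum_infIdx hμ Λ τ hτ (fun u i _ => y u i ^ 2)]
      refine Finset.sum_congr rfl fun p _ => ?_
      rw [hP, Finset.sum_mul]
      exact Finset.sum_congr rfl fun σ _ => by rw [ite_mul, zero_mul]
    have eL : ∀ p : InfIdx μ Λ τ, ∑ r : InfIdx μ Λ τ,
        condProb μ Λ τ p.1.1 p.1.2 * Z * inflMatrix μ Λ τ p r * (y p.1.1 p.1.2 * y r.1.1 r.1.2) =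
        ∑ σ, if σ p.1.1 = p.1.2 then
          m σ * ∑ v ∈ (insert p.1.1 Λ)ᶜ, y p.1.1 p.1.2 * y v (σ v) else 0 := by
      intro p
      -- The product part of the matrix entries drops out because `y` is centered.
      have z : ∑ r : InfIdx μ Λ τ, (if p.1.1 = r.1.1 then 0 else
          condProb μ Λ τ r.1.1 r.1.2 * Z * y r.1.1 r.1.2) = 0 := by
        have := sum_infIdx hμ Λ τ hτ (fun v j _ => if p.1.1 = v then 0 else y v j)
        have e : ∀ r : InfIdx μ Λ τ, (if p.1.1 = r.1.1 then 0 else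
            condProb μ Λ τ r.1.1 r.1.2 * Z * y r.1.1 r.1.2) =
            ∑ σ, (if σ r.1.1 = r.1.2 then m σ * (if p.1.1 = r.1.1 then 0 else y r.1.1 r.1.2)
              else 0) := by
          intro r
          rw [hP]
          split_ifs with h
          · simp
          · rw [Finset.sum_mul]
            exact Finset.sum_congr rfl fun σ _ => by split_ifs <;> simp
        rw [Finset.sum_congr rfl fun r _ => e r]
        refine this.trans (Finset.sum_eq_zero fun u hu => ?_)
        by_cases h : p.1.1 = u
        · simp [h]
        · simpa [h] using hy u hu
      have s1 := sum_infIdx hμ Λ τ hτ (fun v j σ => if p.1.1 = v then 0 else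
        if σ p.1.1 = p.1.2 then y p.1.1 p.1.2 * y v j else 0)
      have e : ∀ r : InfIdx μ Λ τ,
          condProb μ Λ τ p.1.1 p.1.2 * Z * inflMatrix μ Λ τ p r *
            (y p.1.1 p.1.2 * y r.1.1 r.1.2) =
          (∑ σ, (if σ r.1.1 = r.1.2 then m σ * (if p.1.1 = r.1.1 then 0 else
            if σ p.1.1 = p.1.2 then y p.1.1 p.1.2 * y r.1.1 r.1.2 else 0) else 0)) -
          condProb μ Λ τ p.1.1 p.1.2 * y p.1.1 p.1.2 *
            (if p.1.1 = r.1.1 then 0 else condProb μ Λ τ r.1.1 r.1.2 * Z * y r.1.1 r.1.2) := by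
        intro r
        rw [hPM]
        split_ifs with h
        · simp
        · rw [sub_mul, Finset.sum_mul]
          congr 1
          · refine Finset.sum_congr rfl fun σ _ => ?_
            split_ifs <;> simp
          · ring
      rw [Finset.sum_congr rfl fun r _ => e r, Finset.sum_sub_distrib, ← Finset.mul_sum, z,
        mul_zero, sub_zero]
      refine s1.trans ?_
      rw [Finset.sum_comm]
      refine Finset.sum_congr rfl fun σ _ => ?_
      rw [← Finset.mul_sum]
      have ec : (insert p.1.1 Λ)ᶜ = Λᶜ.filter (fun v => ¬ p.1.1 = v) := by
        ext v
        simp only [Finset.mem_compl, Finset.mem_insert, Finset.mem_filter, not_or, eq_comm]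
        tauto
      rw [ec, Finset.sum_filter]
      by_cases h : σ p.1.1 = p.1.2
      · simp only [h, if_true]
        change m σ * _ = m σ * _
        congr 1
        exact Finset.sum_congr rfl fun v _ => by rw [ite_not]
      · simp [h]
    rw [Finset.sum_congr rfl fun p _ => eL p,
      sum_infIdx hμ Λ τ hτ (fun u i σ => ∑ v ∈ (insert u Λ)ᶜ, y u i * y v (σ v)), eR] at hq
    refine le_trans (le_of_eq ?_) hq
    refine Finset.sum_congr rfl fun u _ => ?_
    rw [Finset.sum_comm]
    exact Finset.sum_congr rfl fun σ _ => by rw [Finset.mul_sum]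
  · intro p r
    rw [hPM, hPM]
    by_cases h : p.1.1 = r.1.1
    · rw [if_pos h, if_pos h.symm]
    · rw [if_neg h, if_neg (Ne.symm h)]
      congr 1
      · refine Finset.sum_congr rfl fun σ _ => ?_
        split_ifs <;> rfl
      · ring

end Spectral

/-! ### Local entropy contraction -/

section LocalInequality

variable {V : Type} [Fintype V] [DecidableEq V] {q : ℕ}

/-- Disintegration of a `μ`-sum along the value of `σ_Λ`. -/
lemma sum_disintegrate {μ : (V → Fin q) → ℝ} (hμ : ∀ σ, 0 ≤ μ σ) (Λ : Finset V)
    (h : (V → Fin q) → ℝ) :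
    ∑ σ, μ σ * h σ = ∑ τ, μ τ / prAgree μ Λ τ *
      ∑ σ, (if ∀ v ∈ Λ, σ v = τ v then μ σ else 0) * h σ := by
  have := sum_condMean hμ h Λ (fun _ => 1) (fun _ _ _ => rfl)
  simp only [mul_one] at this
  rw [← this]
  refine Finset.sum_congr rfl fun τ _ => ?_
  rw [condMean, prAgree, mul_div_assoc', mul_div_right_comm]
  congr 1
  exact Finset.sum_congr rfl fun σ _ => by rw [ite_mul, zero_mul]

/-- The density of the law of the spin at `u` tilted by `f`, given `σ_Λ`. -/
noncomputable def relMean (μ f : (V → Fin q) → ℝ) (Λ : Finset V) (u : V)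
    (σ : V → Fin q) : ℝ :=
  condMean μ f (insert u Λ) σ / condMean μ f Λ σ

lemma relMean_nonneg {μ f : (V → Fin q) → ℝ} (hμ : ∀ σ, 0 ≤ μ σ) (hf : ∀ σ, 0 ≤ f σ)
    (Λ : Finset V) (u : V) (σ : V → Fin q) : 0 ≤ relMean μ f Λ u σ :=
  div_nonneg (condMean_nonneg hμ hf _ _) (condMean_nonneg hμ hf _ _)

lemma condMean_insert_eq_zero {μ f : (V → Fin q) → ℝ} (hμ : ∀ σ, 0 ≤ μ σ)
    (hf : ∀ σ, 0 ≤ f σ) {Λ : Finset V} (u : V) {σ : V → Fin q} (hσ : 0 < μ σ)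
    (h : condMean μ f Λ σ = 0) : condMean μ f (insert u Λ) σ = 0 := by
  have hw : ∀ σ, 0 ≤ μ σ * f σ := fun σ => mul_nonneg (hμ σ) (hf σ)
  have hp : 0 < prAgree μ Λ σ := hσ.trans_le (le_prAgree hμ _ _)
  have h1 : prAgree (fun σ => μ σ * f σ) Λ σ = 0 := by
    rcases div_eq_zero_iff.1 h with h | h
    · exact h
    · exact absurd h hp.ne'
  have h2 := prAgree_anti hw (Finset.subset_insert u Λ) σ
  rw [condMean, le_antisymm (h2.trans h1.le) (prAgree_nonneg hw _ _), zero_div]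

lemma condMean_mul_relMean {μ f : (V → Fin q) → ℝ} (hμ : ∀ σ, 0 ≤ μ σ)
    (hf : ∀ σ, 0 ≤ f σ) (Λ : Finset V) (u : V) (σ : V → Fin q) :
    μ σ * (condMean μ f Λ σ * relMean μ f Λ u σ) = μ σ * condMean μ f (insert u Λ) σ := by
  rcases (hμ σ).eq_or_lt with h0 | h0
  · simp [← h0]
  congr 1
  by_cases h : condMean μ f Λ σ = 0
  · rw [h, zero_mul, condMean_insert_eq_zero hμ hf u h0 h]
  · rw [relMean, mul_div_cancel₀ _ h]

/-- Marginal boundedness bounds the densities `relMean` by `1 / b`. -/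
lemma relMean_le {μ f : (V → Fin q) → ℝ} (hμ : ∀ σ, 0 ≤ μ σ) (hf : ∀ σ, 0 ≤ f σ) {b : ℝ}
    (hb : 0 < b) (hmb : MarginallyBounded μ b) {Λ : Finset V} {u : V} (hu : u ∉ Λ)
    {σ : V → Fin q} (hσ : 0 < μ σ) : b * relMean μ f Λ u σ ≤ 1 := by
  have hw : ∀ σ, 0 ≤ μ σ * f σ := fun σ => mul_nonneg (hμ σ) (hf σ)
  have hp : 0 < prAgree μ Λ σ := hσ.trans_le (le_prAgree hμ _ _)
  have hp' : 0 < prAgree μ (insert u Λ) σ := hσ.trans_le (le_prAgree hμ _ _)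
  have hc : condProb μ Λ σ u (σ u) = prAgree μ (insert u Λ) σ / prAgree μ Λ σ := by
    rw [condProb, Function.update_eq_self]
  have hle := hmb Λ (fun h => hu (h ▸ Finset.mem_univ u)) σ hp u hu (σ u)
    (by rw [hc]; exact div_pos hp' hp)
  rw [hc, le_div_iff₀ hp] at hle
  have hN := prAgree_anti hw (Finset.subset_insert u Λ) σ
  rcases (prAgree_nonneg hw Λ σ).eq_or_lt with h0 | h0
  · simp [relMean, condMean, ← h0]
  rw [relMean, condMean, condMean, div_div_div_eq, mul_div_assoc', div_le_one (by positivity)]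
  calc _ = prAgree (fun σ => μ σ * f σ) (insert u Λ) σ * (b * prAgree μ Λ σ) := by ring
    _ ≤ prAgree (fun σ => μ σ * f σ) Λ σ * prAgree μ (insert u Λ) σ :=
        mul_le_mul hN hle (by positivity) h0.le
    _ = _ := by ring

/-- `x log x ≥ x - 1` with a quadratic remainder, from `log √x ≥ 1 - 1 / √x`. -/
lemma sq_le_mul_log {b x : ℝ} (hb0 : 0 < b) (hb1 : b ≤ 1) (hx : 0 ≤ x) (hbx : b * x ≤ 1) :
    b ^ 2 / 4 * (x - 1) ^ 2 ≤ x * Real.log x - x + 1 := by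
  have h1 : (√x - 1) ^ 2 ≤ x * Real.log x - x + 1 := by
    rcases hx.eq_or_lt with h0 | h0
    · simp [← h0]
    have hs := Real.sqrt_pos.2 h0
    have h2 := Real.one_sub_inv_le_log_of_pos hs
    rw [Real.log_sqrt hx] at h2
    have h3 := Real.sq_sqrt hx
    have h4 : x * (√x)⁻¹ = √x := by
      rw [← div_eq_mul_inv, Real.div_sqrt]
    have h5 : x * (1 - (√x)⁻¹) ≤ x * (Real.log x / 2) := mul_le_mul_of_nonneg_left h2 hx
    nlinarith
  have h3 := Real.sq_sqrt hx
  have hs := Real.sqrt_nonneg x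
  have h4 : (b * (√x + 1)) ^ 2 ≤ 4 := by
    have : b * √x ≤ 1 := by
      have : (b * √x) ^ 2 ≤ 1 := by
        rw [mul_pow, h3]; nlinarith
      nlinarith [mul_nonneg hb0.le hs]
    have h5 : b * (√x + 1) ≤ 2 := by linarith
    have h6 : 0 ≤ b * (√x + 1) := by positivity
    nlinarith
  have e : (x - 1) ^ 2 = (√x + 1) ^ 2 * (√x - 1) ^ 2 := by
    rw [← mul_pow]; congr 1; linear_combination -h3
  rw [e]
  nlinarith [mul_le_mul_of_nonneg_right h4 (sq_nonneg (√x - 1))]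

/-- Second mixed difference of `logMean`, bounded below through `log t ≥ 1 - 1 / t`. -/
lemma logMean_mixed {μ f : (V → Fin q) → ℝ} (hμ : ∀ σ, 0 ≤ μ σ) (hf : ∀ σ, 0 ≤ f σ)
    (Λ : Finset V) (u v : V) :
    - ∑ σ, μ σ * (condMean μ f Λ σ * ((relMean μ f Λ u σ - 1) * (relMean μ f Λ v σ - 1))) ≤
      logMean μ f (insert v (insert u Λ)) - logMean μ f (insert u Λ) -
        logMean μ f (insert v Λ) + logMean μ f Λ := by
  have hone : ∀ M : Finset V, ∑ σ, μ σ * condMean μ f M σ = ∑ σ, μ σ * f σ := fun M => by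
    simpa using sum_condMean hμ f M (fun _ => 1) (fun _ _ _ => rfl)
  set t : (V → Fin q) → ℝ := fun σ => condMean μ f (insert u Λ) σ * condMean μ f (insert v Λ) σ /
    (condMean μ f (insert v (insert u Λ)) σ * condMean μ f Λ σ) with ht
  have h1 : logMean μ f (insert v (insert u Λ)) - logMean μ f (insert u Λ) -
      logMean μ f (insert v Λ) + logMean μ f Λ ≥ ∑ σ, μ σ * f σ * (1 - t σ) := by
    simp only [logMean]
    rw [← Finset.sum_sub_distrib, ← Finset.sum_sub_distrib, ← Finset.sum_add_distrib]
    refine Finset.sum_le_sum fun σ _ => ?_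
    rcases (hμ σ).eq_or_lt with h0 | h0
    · simp [← h0]
    rcases (hf σ).eq_or_lt with h1 | h1
    · simp [← h1]
    have p1 := condMean_pos hμ hf (insert v (insert u Λ)) h0 h1
    have p2 := condMean_pos hμ hf (insert u Λ) h0 h1
    have p3 := condMean_pos hμ hf (insert v Λ) h0 h1
    have p4 := condMean_pos hμ hf Λ h0 h1
    have hl := Real.log_le_sub_one_of_pos (div_pos (mul_pos p2 p3) (mul_pos p1 p4))
    rw [Real.log_div (by positivity) (by positivity), Real.log_mul p2.ne' p3.ne',
      Real.log_mul p1.ne' p4.ne'] at hl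
    have := mul_le_mul_of_nonneg_left hl (mul_pos h0 h1).le
    simp only [ht]
    linarith
  have h2 : ∑ σ, μ σ * f σ * t σ ≤
      ∑ σ, μ σ * (condMean μ f Λ σ * (relMean μ f Λ u σ * relMean μ f Λ v σ)) := by
    rw [← sum_condMean hμ f (insert v (insert u Λ)) t]
    · refine Finset.sum_le_sum fun σ _ => ?_
      have n1 := condMean_nonneg hμ hf (insert v (insert u Λ)) σ
      have n2 := condMean_nonneg hμ hf (insert u Λ) σ
      have n3 := condMean_nonneg hμ hf (insert v Λ) σ
      have n4 := condMean_nonneg hμ hf Λ σ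
      rw [mul_assoc]
      refine mul_le_mul_of_nonneg_left ?_ (hμ σ)
      simp only [ht, relMean]
      rcases n1.eq_or_lt with h | h
      · rw [← h, zero_mul]; positivity
      rcases n4.eq_or_lt with h' | h'
      · simp [← h']
      apply le_of_eq
      field_simp
    · intro σ τ hστ
      have s1 : ∀ w ∈ insert u Λ, σ w = τ w := fun w hw => hστ w (by simp at hw ⊢; tauto)
      have s2 : ∀ w ∈ insert v Λ, σ w = τ w := fun w hw => hστ w (by simp at hw ⊢; tauto)
      have s3 : ∀ w ∈ Λ, σ w = τ w := fun w hw => hστ w (by simp; tauto)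
      simp only [ht, condMean_congr μ f hστ, condMean_congr μ f s1, condMean_congr μ f s2,
        condMean_congr μ f s3]
  have h3 : ∑ σ, μ σ * (condMean μ f Λ σ *
        ((relMean μ f Λ u σ - 1) * (relMean μ f Λ v σ - 1))) =
      ∑ σ, μ σ * (condMean μ f Λ σ * (relMean μ f Λ u σ * relMean μ f Λ v σ)) -
        ∑ σ, μ σ * f σ := by
    have e : ∀ σ, μ σ * (condMean μ f Λ σ *
        ((relMean μ f Λ u σ - 1) * (relMean μ f Λ v σ - 1))) =
        μ σ * (condMean μ f Λ σ * (relMean μ f Λ u σ * relMean μ f Λ v σ)) -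
        μ σ * condMean μ f (insert u Λ) σ - μ σ * condMean μ f (insert v Λ) σ +
        μ σ * condMean μ f Λ σ := fun σ => by
      linear_combination -condMean_mul_relMean hμ hf Λ u σ - condMean_mul_relMean hμ hf Λ v σ
    simp only [e, Finset.sum_add_distrib, Finset.sum_sub_distrib, hone]
    ring
  rw [h3]
  simp only [mul_sub, mul_one, Finset.sum_sub_distrib] at h1
  linarith

/-- The entropy gained by revealing `u` dominates the variance of the density at `u`. -/
lemma logMean_insert {μ f : (V → Fin q) → ℝ} (hμ : ∀ σ, 0 ≤ μ σ) (hf : ∀ σ, 0 ≤ f σ) {b : ℝ}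
    (hb0 : 0 < b) (hb1 : b ≤ 1) (hmb : MarginallyBounded μ b) {Λ : Finset V} {u : V}
    (hu : u ∉ Λ) :
    b ^ 2 / 4 * ∑ σ, μ σ * (condMean μ f Λ σ * (relMean μ f Λ u σ - 1) ^ 2) ≤
      logMean μ f (insert u Λ) - logMean μ f Λ := by
  have hone : ∀ M : Finset V, ∑ σ, μ σ * condMean μ f M σ = ∑ σ, μ σ * f σ := fun M => by
    simpa using sum_condMean hμ f M (fun _ => 1) (fun _ _ _ => rfl)
  have h1 : logMean μ f (insert u Λ) - logMean μ f Λ =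
      ∑ σ, μ σ * (condMean μ f Λ σ * (relMean μ f Λ u σ * Real.log (relMean μ f Λ u σ) -
        relMean μ f Λ u σ + 1)) := by
    have e : ∀ σ, μ σ * (condMean μ f Λ σ * (relMean μ f Λ u σ * Real.log (relMean μ f Λ u σ) -
        relMean μ f Λ u σ + 1)) =
        μ σ * condMean μ f (insert u Λ) σ * Real.log (relMean μ f Λ u σ) -
        μ σ * condMean μ f (insert u Λ) σ + μ σ * condMean μ f Λ σ := fun σ => by
      linear_combination (Real.log (relMean μ f Λ u σ) - 1) * condMean_mul_relMean hμ hf Λ u σ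
    simp only [e, Finset.sum_add_distrib, Finset.sum_sub_distrib, hone]
    rw [sum_condMean hμ f (insert u Λ)]
    · simp only [logMean]
      rw [← Finset.sum_sub_distrib, sub_add_cancel]
      refine Finset.sum_congr rfl fun σ _ => ?_
      rcases (hμ σ).eq_or_lt with h0 | h0
      · simp [← h0]
      rcases (hf σ).eq_or_lt with h1 | h1
      · simp [← h1]
      rw [relMean, Real.log_div (condMean_pos hμ hf _ h0 h1).ne' (condMean_pos hμ hf _ h0 h1).ne']
      ring
    · intro σ τ hστ
      have s3 : ∀ w ∈ Λ, σ w = τ w := fun w hw => hστ w (by simp; tauto)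
      simp only [relMean, condMean_congr μ f hστ, condMean_congr μ f s3]
  rw [h1, Finset.mul_sum]
  refine Finset.sum_le_sum fun σ _ => ?_
  rcases (hμ σ).eq_or_lt with h0 | h0
  · simp [← h0]
  have := sq_le_mul_log hb0 hb1 (relMean_nonneg hμ hf Λ u σ) (relMean_le hμ hf hb0 hmb hu h0)
  have h2 := mul_le_mul_of_nonneg_left this (mul_nonneg h0.le (condMean_nonneg hμ hf Λ σ))
  linarith

lemma logMean_mono {μ f : (V → Fin q) → ℝ} (hμ : ∀ σ, 0 ≤ μ σ) (hf : ∀ σ, 0 ≤ f σ) {b : ℝ}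
    (hb0 : 0 < b) (hb1 : b ≤ 1) (hmb : MarginallyBounded μ b) {Λ : Finset V} {u : V}
    (hu : u ∉ Λ) : logMean μ f Λ ≤ logMean μ f (insert u Λ) := by
  have h := logMean_insert hμ hf hb0 hb1 hmb hu
  have : 0 ≤ ∑ σ, μ σ * (condMean μ f Λ σ * (relMean μ f Λ u σ - 1) ^ 2) :=
    Finset.sum_nonneg fun σ _ => mul_nonneg (hμ σ)
      (mul_nonneg (condMean_nonneg hμ hf Λ σ) (sq_nonneg _))
  have := mul_nonneg (by positivity : 0 ≤ b ^ 2 / 4) this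
  linarith

/-- Spectral independence applied to the densities `relMean`. -/
lemma relMean_cov_le {μ f : (V → Fin q) → ℝ} (hμ : ∀ σ, 0 ≤ μ σ) (hf : ∀ σ, 0 ≤ f σ) {η : ℝ}
    (hsi : SpectrallyIndependent μ η) {Λ : Finset V} (hΛ : Λ ≠ univ) :
    ∑ u ∈ Λᶜ, ∑ v ∈ (insert u Λ)ᶜ, ∑ σ, μ σ * (condMean μ f Λ σ *
        ((relMean μ f Λ u σ - 1) * (relMean μ f Λ v σ - 1))) ≤
      η * ∑ u ∈ Λᶜ, ∑ σ, μ σ * (condMean μ f Λ σ * (relMean μ f Λ u σ - 1) ^ 2) := by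
  have loc : ∀ (τ : V → Fin q) (h : (V → Fin q) → ℝ),
      ∑ σ, (if ∀ v ∈ Λ, σ v = τ v then μ σ else 0) * (condMean μ f Λ σ * h σ) =
      condMean μ f Λ τ * ∑ σ, (if ∀ v ∈ Λ, σ v = τ v then μ σ else 0) * h σ := by
    intro τ h
    rw [Finset.mul_sum]
    refine Finset.sum_congr rfl fun σ _ => ?_
    split_ifs with hc
    · rw [condMean_congr μ f hc]; ring
    · simp
  have eL : ∑ u ∈ Λᶜ, ∑ v ∈ (insert u Λ)ᶜ, ∑ σ, μ σ * (condMean μ f Λ σ *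
        ((relMean μ f Λ u σ - 1) * (relMean μ f Λ v σ - 1))) =
      ∑ τ, μ τ / prAgree μ Λ τ * (condMean μ f Λ τ * ∑ u ∈ Λᶜ, ∑ v ∈ (insert u Λ)ᶜ, ∑ σ,
        (if ∀ v ∈ Λ, σ v = τ v then μ σ else 0) *
          ((relMean μ f Λ u σ - 1) * (relMean μ f Λ v σ - 1))) := by
    simp only [Finset.mul_sum (s := Λᶜ), Finset.mul_sum (s := (insert _ Λ)ᶜ)]
    refine Eq.trans ?_ Finset.sum_comm
    refine Finset.sum_congr rfl fun u _ => ?_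
    refine Eq.trans ?_ Finset.sum_comm
    refine Finset.sum_congr rfl fun v _ => ?_
    rw [sum_disintegrate hμ Λ]
    exact Finset.sum_congr rfl fun τ _ => by rw [loc]
  have eR : ∑ u ∈ Λᶜ, ∑ σ, μ σ * (condMean μ f Λ σ * (relMean μ f Λ u σ - 1) ^ 2) =
      ∑ τ, μ τ / prAgree μ Λ τ * (condMean μ f Λ τ * ∑ u ∈ Λᶜ, ∑ σ,
        (if ∀ v ∈ Λ, σ v = τ v then μ σ else 0) * (relMean μ f Λ u σ - 1) ^ 2) := by
    simp only [Finset.mul_sum (s := Λᶜ)]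
    refine Eq.trans ?_ Finset.sum_comm
    refine Finset.sum_congr rfl fun u _ => ?_
    rw [sum_disintegrate hμ Λ]
    exact Finset.sum_congr rfl fun τ _ => by rw [loc]
  rw [eL, eR, Finset.mul_sum]
  refine Finset.sum_le_sum fun τ _ => ?_
  rcases (hμ τ).eq_or_lt with h0 | h0
  · simp [← h0]
  have hp : 0 < prAgree μ Λ τ := h0.trans_le (le_prAgree hμ _ _)
  have hc := condMean_nonneg hμ hf Λ τ
  rcases hc.eq_or_lt with hc0 | hc0
  · simp [← hc0]
  -- Given `σ_Λ = τ`, the density at `u` is a function of the spin at `u` alone.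
  set y : V → Fin q → ℝ := fun u i => relMean μ f Λ u (Function.update τ u i) - 1 with hy
  have hrel : ∀ u ∈ Λᶜ, ∀ σ : V → Fin q, (∀ v ∈ Λ, σ v = τ v) →
      relMean μ f Λ u σ - 1 = y u (σ u) := by
    intro u hu σ hσ
    have s1 : ∀ w ∈ insert u Λ, σ w = Function.update τ u (σ u) w := by
      intro w hw
      by_cases hwu : w = u
      · subst hwu; simp
      · rw [Function.update_of_ne hwu, hσ w (Finset.mem_of_mem_insert_of_ne hw hwu)]
    have s2 : ∀ w ∈ Λ, σ w = Function.update τ u (σ u) w :=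
      fun w hw => s1 w (Finset.mem_insert_of_mem hw)
    simp only [hy, relMean, ← condMean_congr μ f s1, ← condMean_congr μ f s2]
  have key := cov_le hμ hsi Λ hΛ τ hp y ?_
  · have e1 : ∑ u ∈ Λᶜ, ∑ v ∈ (insert u Λ)ᶜ, ∑ σ,
        (if ∀ v ∈ Λ, σ v = τ v then μ σ else 0) *
          ((relMean μ f Λ u σ - 1) * (relMean μ f Λ v σ - 1)) =
        ∑ u ∈ Λᶜ, ∑ v ∈ (insert u Λ)ᶜ, ∑ σ,
        (if ∀ v ∈ Λ, σ v = τ v then μ σ else 0) * (y u (σ u) * y v (σ v)) := by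
      refine Finset.sum_congr rfl fun u hu => Finset.sum_congr rfl fun v hv =>
        Finset.sum_congr rfl fun σ _ => ?_
      split_ifs with h
      · rw [hrel u hu σ h, hrel v (by simp at hv ⊢; tauto) σ h]
      · simp
    have e2 : ∑ u ∈ Λᶜ, ∑ σ,
        (if ∀ v ∈ Λ, σ v = τ v then μ σ else 0) * (relMean μ f Λ u σ - 1) ^ 2 =
        ∑ u ∈ Λᶜ, ∑ σ, (if ∀ v ∈ Λ, σ v = τ v then μ σ else 0) * y u (σ u) ^ 2 := by
      refine Finset.sum_congr rfl fun u hu => Finset.sum_congr rfl fun σ _ => ?_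
      split_ifs with h
      · rw [hrel u hu σ h]
      · simp
    rw [e1, e2]
    calc _ ≤ _ := mul_le_mul_of_nonneg_left (mul_le_mul_of_nonneg_left key hc)
          (div_nonneg h0.le hp.le)
      _ = _ := by ring
  · -- The density has conditional mean one.
    intro u hu
    have h1 := sum_condMean hμ f (insert u Λ) (fun σ => if ∀ v ∈ Λ, σ v = τ v then 1 else 0) ?_
    · have e1 : ∑ σ, (if ∀ v ∈ Λ, σ v = τ v then μ σ else 0) * y u (σ u) =
          (∑ σ, μ σ * condMean μ f (insert u Λ) σ * (if ∀ v ∈ Λ, σ v = τ v then 1 else 0)) /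
            condMean μ f Λ τ - prAgree μ Λ τ := by
        rw [prAgree, Finset.sum_div, ← Finset.sum_sub_distrib]
        refine Finset.sum_congr rfl fun σ _ => ?_
        split_ifs with h
        · rw [← hrel u hu σ h, relMean, condMean_congr μ f h]; ring
        · simp
      have e2 : ∑ σ, μ σ * f σ * (if ∀ v ∈ Λ, σ v = τ v then 1 else 0) =
          prAgree (fun σ => μ σ * f σ) Λ τ := by
        simp only [mul_ite, mul_one, mul_zero, prAgree]
      have e3 : prAgree (fun σ => μ σ * f σ) Λ τ = condMean μ f Λ τ * prAgree μ Λ τ := by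
        rw [condMean, div_mul_cancel₀ _ hp.ne']
      rw [e1, h1, e2, e3, mul_div_cancel_left₀ _ hc0.ne', sub_self]
    · intro σ ρ hσρ
      have : (∀ v ∈ Λ, σ v = τ v) ↔ (∀ v ∈ Λ, ρ v = τ v) :=
        forall₂_congr fun v hv => by rw [hσρ v (Finset.mem_insert_of_mem hv)]
      simp only [this]

/-- Local entropy contraction: revealing two vertices beyond `Λ`, the second one gains almost
as much entropy on average as the first. -/
lemma local_contraction {μ f : (V → Fin q) → ℝ} (hμ : ∀ σ, 0 ≤ μ σ) (hf : ∀ σ, 0 ≤ f σ)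
    {b η : ℝ} (hb0 : 0 < b) (hb1 : b ≤ 1) (hη : 0 < η) (hmb : MarginallyBounded μ b)
    (hsi : SpectrallyIndependent μ η) {Λ : Finset V} (hΛ : Λ ≠ univ) :
    -(4 * η / b ^ 2) * ∑ u ∈ Λᶜ, (logMean μ f (insert u Λ) - logMean μ f Λ) ≤
      ∑ u ∈ Λᶜ, ∑ v ∈ (insert u Λ)ᶜ, (logMean μ f (insert v (insert u Λ)) -
        logMean μ f (insert u Λ) - logMean μ f (insert v Λ) + logMean μ f Λ) := by
  have h1 := Finset.sum_le_sum fun u (_ : u ∈ Λᶜ) =>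
    Finset.sum_le_sum fun v (_ : v ∈ (insert u Λ)ᶜ) => logMean_mixed hμ hf Λ u v
  have h2 := relMean_cov_le hμ hf hsi hΛ
  have h3 : ∑ u ∈ Λᶜ, b ^ 2 / 4 *
      ∑ σ, μ σ * (condMean μ f Λ σ * (relMean μ f Λ u σ - 1) ^ 2) ≤
      ∑ u ∈ Λᶜ, (logMean μ f (insert u Λ) - logMean μ f Λ) := Finset.sum_le_sum fun u hu =>
    logMean_insert hμ hf hb0 hb1 hmb (by simpa using hu)
  simp only [Finset.sum_neg_distrib] at h1
  rw [← Finset.mul_sum] at h3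
  have h4 := mul_le_mul_of_nonneg_left h3 (by positivity : 0 ≤ 4 * η / b ^ 2)
  rw [← mul_assoc, show 4 * η / b ^ 2 * (b ^ 2 / 4) = η by field_simp] at h4
  linarith

end LocalInequality

/-! ### Growth of sequences and counting of vertex sets -/

section Numeric

/-- If the increments `A (N+1) - A N` grow at most like `N ^ R`, then `A` itself grows at most
like `(N + 1 - r) ^ r` with `r = R + 1`. -/
lemma growth_bound {R θ : ℝ} (hR : 0 ≤ R) (hθ : 0 < θ) {n ℓ : ℕ} (A : ℕ → ℝ)
    (h0 : A 0 = 0) (hmono : ∀ N < n, A N ≤ A (N + 1))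
    (hstep : ∀ N, N + 1 < n →
      ((N : ℝ) + 1 - R) * (A (N + 2) - A (N + 1)) ≤ ((N : ℝ) + 1) * (A (N + 1) - A N))
    (hℓn : ℓ ≤ n) (hℓ1 : θ * n ≤ ℓ) (hℓ2 : 2 * (R + 1) ≤ ℓ) :
    A n ≤ (2 / θ) ^ (R + 1) * A ℓ := by
  have key : ∀ N, N < n → ((N : ℝ) + 1) * (A (N + 1) - A N) ≤ (R + 1) * A (N + 1) := by
    intro N
    induction N with
    | zero =>
      intro hN
      have h := hmono 0 hN
      rw [h0] at h ⊢
      push_cast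
      nlinarith
    | succ N ih =>
      intro hN
      have h1 := ih (by omega)
      have h2 := hstep N hN
      push_cast
      linarith
  have hnn : ∀ N, N ≤ n → 0 ≤ A N := by
    intro N
    induction N with
    | zero => intro _; exact h0.ge
    | succ N ih => intro hN; exact (ih (by omega)).trans (hmono N (by omega))
  -- Telescoping `A N ≥ (1 - r / (N + 1)) A (N + 1)`, bounding each factor by Bernoulli.
  have tel : ∀ N, ℓ ≤ N → N ≤ n → ((ℓ : ℝ) - R) ^ (R + 1) * A N ≤
      ((N : ℝ) - R) ^ (R + 1) * A ℓ := by
    intro N hN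
    induction N, hN using Nat.le_induction with
    | base => intro _; exact le_rfl
    | succ N hN ih =>
      intro hNn
      have h1 := ih (by omega)
      have h2 := key N (by omega)
      have hNl : (ℓ : ℝ) ≤ N := by exact_mod_cast hN
      have hpos : 0 < (N : ℝ) - R := by linarith
      have hb : (N : ℝ) + 1 ≤ (((N : ℝ) + 1 - R) / (N - R)) ^ (R + 1) * (N - R) := by
        have := one_add_mul_self_le_rpow_one_add (s := 1 / ((N : ℝ) - R))
          (by have := one_div_pos.2 hpos; linarith) (p := R + 1) (by linarith)
        have e : 1 + 1 / ((N : ℝ) - R) = ((N : ℝ) + 1 - R) / (N - R) := by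
          field_simp; ring
        rw [e] at this
        have h3 := mul_le_mul_of_nonneg_right this hpos.le
        have e2 : (1 + (R + 1) * (1 / ((N : ℝ) - R))) * (N - R) = N + 1 := by
          field_simp; ring
        rw [e2] at h3
        exact h3
      rw [Real.div_rpow (by linarith) hpos.le] at hb
      set X := ((N : ℝ) + 1 - R) ^ (R + 1)
      set Y := ((N : ℝ) - R) ^ (R + 1) with hY
      set Z := ((ℓ : ℝ) - R) ^ (R + 1) with hZ
      have hYp : 0 < Y := Real.rpow_pos_of_pos hpos _
      have hZp : 0 < Z := Real.rpow_pos_of_pos (by linarith) _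
      have hAl := hnn ℓ hℓn
      have h4 : ((N : ℝ) - R) * A (N + 1) ≤ (N + 1) * A N := by linarith
      have hANn := hnn N (by omega)
      have h5 : A (N + 1) ≤ X / Y * A N := by
        have : ((N : ℝ) - R) * A (N + 1) ≤ (N - R) * (X / Y * A N) := by
          calc _ ≤ _ := h4
            _ ≤ (X / Y * (N - R)) * A N := mul_le_mul_of_nonneg_right hb hANn
            _ = _ := by ring
        exact le_of_mul_le_mul_left this hpos
      have e : ((N + 1 : ℕ) : ℝ) - R = (N : ℝ) + 1 - R := by push_cast; ring
      rw [e]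
      have hX : 0 ≤ X / Y := div_nonneg (Real.rpow_nonneg (by linarith) _) hYp.le
      calc Z * A (N + 1) ≤ Z * (X / Y * A N) := mul_le_mul_of_nonneg_left h5 hZp.le
        _ = X / Y * (Z * A N) := by ring
        _ ≤ X / Y * (Y * A ℓ) := mul_le_mul_of_nonneg_left h1 hX
        _ = X * A ℓ := by field_simp
  have ht := tel n hℓn le_rfl
  have hlp : 0 < (ℓ : ℝ) - R := by linarith
  have hln : (ℓ : ℝ) ≤ n := by exact_mod_cast hℓn
  have hZp : 0 < ((ℓ : ℝ) - R) ^ (R + 1) := Real.rpow_pos_of_pos hlp _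
  have hr : ((n : ℝ) - R) ^ (R + 1) ≤ (2 / θ) ^ (R + 1) * ((ℓ : ℝ) - R) ^ (R + 1) := by
    rw [← Real.mul_rpow (by positivity) hlp.le]
    refine Real.rpow_le_rpow (by linarith) ?_ (by linarith)
    rw [div_mul_eq_mul_div, le_div_iff₀ hθ]
    nlinarith
  have : ((ℓ : ℝ) - R) ^ (R + 1) * A n ≤
      ((ℓ : ℝ) - R) ^ (R + 1) * ((2 / θ) ^ (R + 1) * A ℓ) := by
    calc _ ≤ _ := ht
      _ ≤ _ := mul_le_mul_of_nonneg_right hr (hnn ℓ hℓn)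
      _ = _ := by ring
  exact le_of_mul_le_mul_left this hZp

/-- Summing over `k`-sets and then over the added point counts each `(k+1)`-set `k + 1` times. -/
lemma sum_insert_point {V : Type} [Fintype V] [DecidableEq V] (g : Finset V → ℝ) (k : ℕ) :
    ∑ Λ ∈ powersetCard k (univ : Finset V), ∑ u ∈ Λᶜ, g (insert u Λ) =
      (k + 1) * ∑ Λ ∈ powersetCard (k + 1) (univ : Finset V), g Λ := by
  have : ∀ Λ ∈ powersetCard (k + 1) (univ : Finset V), ((k : ℝ) + 1) * g Λ = ∑ _u ∈ Λ, g Λ := by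
    intro Λ hΛ
    rw [mem_powersetCard] at hΛ
    simp [hΛ.2]
  rw [Finset.mul_sum, Finset.sum_congr rfl this, Finset.sum_sigma', Finset.sum_sigma']
  refine Finset.sum_bij' (fun x _ => ⟨insert x.2 x.1, x.2⟩) (fun x _ => ⟨x.1.erase x.2, x.2⟩)
    ?_ ?_ ?_ ?_ ?_
  · rintro ⟨Λ, u⟩ h
    simp only [mem_sigma, mem_powersetCard, mem_compl, subset_univ, true_and] at h ⊢
    exact ⟨by rw [card_insert_of_notMem h.2, h.1], mem_insert_self _ _⟩
  · rintro ⟨Λ, u⟩ h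
    simp only [mem_sigma, mem_powersetCard, mem_compl, subset_univ, true_and] at h ⊢
    exact ⟨by rw [card_erase_of_mem h.2, h.1]; rfl, notMem_erase _ _⟩
  · rintro ⟨Λ, u⟩ h
    simp only [mem_sigma, mem_compl] at h
    simp [erase_insert h.2]
  · rintro ⟨Λ, u⟩ h
    simp only [mem_sigma] at h
    simp [insert_erase h.2]
  · rintro ⟨Λ, u⟩ h
    rfl

end Numeric

/-! ### Averaging over levels -/

section Averaging

variable {V : Type} [Fintype V] [DecidableEq V] {q : ℕ}

/-- Average of `logMean μ f Λ` over the vertex sets `Λ` of size `k`. -/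
noncomputable def levelMean (μ f : (V → Fin q) → ℝ) (k : ℕ) : ℝ :=
  ((Fintype.card V).choose k : ℝ)⁻¹ * ∑ Λ ∈ powersetCard k (univ : Finset V), logMean μ f Λ

lemma choose_mul_levelMean (μ f : (V → Fin q) → ℝ) {k : ℕ} (hk : k ≤ Fintype.card V) :
    ∑ Λ ∈ powersetCard k (univ : Finset V), logMean μ f Λ =
      (Fintype.card V).choose k * levelMean μ f k := by
  have : ((Fintype.card V).choose k : ℝ) ≠ 0 := by exact_mod_cast (Nat.choose_pos hk).ne'
  rw [levelMean, mul_inv_cancel_left₀ this]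

lemma choose_succ_mul_real {n k : ℕ} (hk : k ≤ n) :
    ((k : ℝ) + 1) * n.choose (k + 1) = n.choose k * ((n : ℝ) - k) := by
  have := Nat.choose_succ_right_eq n k
  rw [← Nat.cast_sub hk]
  exact_mod_cast (mul_comm _ _).trans this

lemma sum_insert_logMean (μ f : (V → Fin q) → ℝ) {k : ℕ} (hk : k + 1 ≤ Fintype.card V) :
    ∑ Λ ∈ powersetCard k (univ : Finset V), ∑ u ∈ Λᶜ, logMean μ f (insert u Λ) =
      (Fintype.card V).choose k * (((Fintype.card V : ℝ) - k) * levelMean μ f (k + 1)) := by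
  rw [sum_insert_point, choose_mul_levelMean μ f hk, ← mul_assoc, choose_succ_mul_real (by omega),
    mul_assoc]

lemma levelMean_mono {μ f : (V → Fin q) → ℝ} (hμ : ∀ σ, 0 ≤ μ σ) (hf : ∀ σ, 0 ≤ f σ)
    {b : ℝ} (hb0 : 0 < b) (hb1 : b ≤ 1) (hmb : MarginallyBounded μ b) {k : ℕ}
    (hk : k + 1 ≤ Fintype.card V) : levelMean μ f k ≤ levelMean μ f (k + 1) := by
  have h : ∑ Λ ∈ powersetCard k (univ : Finset V), ∑ u ∈ Λᶜ, logMean μ f Λ ≤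
      ∑ Λ ∈ powersetCard k (univ : Finset V), ∑ u ∈ Λᶜ, logMean μ f (insert u Λ) :=
    Finset.sum_le_sum fun Λ _ => Finset.sum_le_sum fun u hu =>
      logMean_mono hμ hf hb0 hb1 hmb (by simpa using hu)
  have e : ∑ Λ ∈ powersetCard k (univ : Finset V), ∑ u ∈ Λᶜ, logMean μ f Λ =
      ((Fintype.card V : ℝ) - k) * ∑ Λ ∈ powersetCard k (univ : Finset V), logMean μ f Λ := by
    rw [Finset.mul_sum]
    refine Finset.sum_congr rfl fun Λ hΛ => ?_
    rw [Finset.sum_const, nsmul_eq_mul, card_compl, (mem_powersetCard.1 hΛ).2,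
      Nat.cast_sub (by omega)]
  rw [e, sum_insert_logMean μ f hk, choose_mul_levelMean μ f (by omega)] at h
  have hc : (0 : ℝ) < (Fintype.card V).choose k := by
    exact_mod_cast Nat.choose_pos (by omega)
  have hm : (0 : ℝ) < (Fintype.card V : ℝ) - k := by
    have : ((k + 1 : ℕ) : ℝ) ≤ Fintype.card V := by exact_mod_cast hk
    push_cast at this; linarith
  refine le_of_mul_le_mul_left ?_ (mul_pos hc hm)
  linarith

/-- The local contraction averaged over all `Λ` of size `k`. -/
lemma levelMean_step {μ f : (V → Fin q) → ℝ} (hμ : ∀ σ, 0 ≤ μ σ) (hf : ∀ σ, 0 ≤ f σ)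
    {b η : ℝ} (hb0 : 0 < b) (hb1 : b ≤ 1) (hη : 0 < η) (hmb : MarginallyBounded μ b)
    (hsi : SpectrallyIndependent μ η) {k : ℕ} (hk : k + 2 ≤ Fintype.card V) :
    -(4 * η / b ^ 2) * (levelMean μ f (k + 1) - levelMean μ f k) ≤
      ((Fintype.card V : ℝ) - k - 1) *
        (levelMean μ f (k + 2) - 2 * levelMean μ f (k + 1) + levelMean μ f k) := by
  set n := Fintype.card V with hn
  set g := logMean μ f with hg
  have hloc : ∀ Λ ∈ powersetCard k (univ : Finset V),
      -(4 * η / b ^ 2) * (∑ u ∈ Λᶜ, g (insert u Λ) - ((n : ℝ) - k) * g Λ) ≤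
      ∑ u ∈ Λᶜ, ∑ v ∈ (insert u Λ)ᶜ, g (insert v (insert u Λ)) -
        2 * ((n : ℝ) - k - 1) * ∑ u ∈ Λᶜ, g (insert u Λ) +
        ((n : ℝ) - k) * ((n : ℝ) - k - 1) * g Λ := by
    intro Λ hΛ
    have hcard : Λ.card = k := (mem_powersetCard.1 hΛ).2
    have hne : Λ ≠ univ := by
      rintro rfl
      rw [card_univ] at hcard
      omega
    have h := local_contraction hμ hf hb0 hb1 hη hmb hsi hne
    have c1 : ((Λᶜ.card : ℕ) : ℝ) = (n : ℝ) - k := by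
      rw [card_compl, hcard, Nat.cast_sub (by omega)]
    have c2 : ∀ u ∈ Λᶜ, (((insert u Λ)ᶜ.card : ℕ) : ℝ) = (n : ℝ) - k - 1 := by
      intro u hu
      rw [card_compl, card_insert_of_notMem (by simpa using hu), hcard, Nat.cast_sub (by omega)]
      push_cast; ring
    have c3 : ∀ u ∈ Λᶜ, ∑ v ∈ (insert u Λ)ᶜ, g (insert v Λ) =
        ∑ v ∈ Λᶜ, g (insert v Λ) - g (insert u Λ) := by
      intro u hu
      rw [compl_insert, ← Finset.add_sum_erase _ _ hu]
      ring
    have e : ∑ u ∈ Λᶜ, ∑ v ∈ (insert u Λ)ᶜ, (g (insert v (insert u Λ)) - g (insert u Λ) -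
        g (insert v Λ) + g Λ) = ∑ u ∈ Λᶜ, ∑ v ∈ (insert u Λ)ᶜ, g (insert v (insert u Λ)) -
        2 * ((n : ℝ) - k - 1) * ∑ u ∈ Λᶜ, g (insert u Λ) +
        ((n : ℝ) - k) * ((n : ℝ) - k - 1) * g Λ := by
      have e1 : ∀ u ∈ Λᶜ, ∑ v ∈ (insert u Λ)ᶜ, (g (insert v (insert u Λ)) - g (insert u Λ) -
          g (insert v Λ) + g Λ) = ∑ v ∈ (insert u Λ)ᶜ, g (insert v (insert u Λ)) -
          ((n : ℝ) - k - 1) * g (insert u Λ) -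
          (∑ v ∈ Λᶜ, g (insert v Λ) - g (insert u Λ)) + ((n : ℝ) - k - 1) * g Λ := by
        intro u hu
        rw [Finset.sum_add_distrib, Finset.sum_sub_distrib, Finset.sum_sub_distrib, c3 u hu,
          Finset.sum_const, Finset.sum_const, nsmul_eq_mul, nsmul_eq_mul, c2 u hu]
      rw [Finset.sum_congr rfl e1, Finset.sum_add_distrib, Finset.sum_sub_distrib,
        Finset.sum_sub_distrib, Finset.sum_sub_distrib, Finset.sum_const, Finset.sum_const,
        nsmul_eq_mul, nsmul_eq_mul, c1, ← Finset.mul_sum]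
      ring
    rw [e, Finset.sum_sub_distrib, Finset.sum_const, nsmul_eq_mul, c1] at h
    exact h
  have hs := Finset.sum_le_sum hloc
  rw [← Finset.mul_sum, Finset.sum_sub_distrib, Finset.sum_add_distrib, Finset.sum_sub_distrib,
    ← Finset.mul_sum, ← Finset.mul_sum, ← Finset.mul_sum] at hs
  have t1 := sum_insert_logMean μ f (k := k) (by omega)
  have t0 := choose_mul_levelMean μ f (k := k) (by omega)
  have t2 : ∑ Λ ∈ powersetCard k (univ : Finset V), ∑ u ∈ Λᶜ, ∑ v ∈ (insert u Λ)ᶜ,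
      g (insert v (insert u Λ)) =
      n.choose k * (((n : ℝ) - k) * (((n : ℝ) - k - 1) * levelMean μ f (k + 2))) := by
    rw [sum_insert_point (fun M => ∑ v ∈ Mᶜ, g (insert v M)) k, hg,
      sum_insert_logMean μ f (k := k + 1) (by omega), ← mul_assoc,
      choose_succ_mul_real (by omega : k ≤ Fintype.card V)]
    push_cast
    ring
  rw [← hg, ← hn] at t1 t0
  rw [t1, t0, t2] at hs
  have hc : (0 : ℝ) < n.choose k := by
    exact_mod_cast Nat.choose_pos (by omega)
  have hm : (0 : ℝ) < (n : ℝ) - k := by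
    have : ((k + 2 : ℕ) : ℝ) ≤ n := by exact_mod_cast hk
    push_cast at this; linarith
  refine le_of_mul_le_mul_left ?_ (mul_pos hc hm)
  linarith

lemma avg_avgEnt {μ f : (V → Fin q) → ℝ} (hμ : ∀ σ, 0 ≤ μ σ) (hf : ∀ σ, 0 ≤ f σ) {ℓ : ℕ}
    (hℓ : ℓ ≤ Fintype.card V) :
    ((Fintype.card V).choose ℓ : ℝ)⁻¹ *
        ∑ S ∈ powersetCard ℓ (univ : Finset V), avgEnt μ S f =
      levelMean μ f (Fintype.card V) - levelMean μ f (Fintype.card V - ℓ) := by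
  have hc : ((Fintype.card V).choose ℓ : ℝ) ≠ 0 := by exact_mod_cast (Nat.choose_pos hℓ).ne'
  have e : ∑ S ∈ powersetCard ℓ (univ : Finset V), logMean μ f Sᶜ =
      ∑ Λ ∈ powersetCard (Fintype.card V - ℓ) (univ : Finset V), logMean μ f Λ := by
    refine Finset.sum_bij' (fun S _ => Sᶜ) (fun S _ => Sᶜ) ?_ ?_ ?_ ?_ ?_
    · intro S hS
      simp only [mem_powersetCard, subset_univ, true_and] at hS ⊢
      rw [card_compl, hS]
    · intro S hS
      simp only [mem_powersetCard, subset_univ, true_and] at hS ⊢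
      rw [card_compl, hS]; omega
    · intro S _; exact compl_compl S
    · intro S _; exact compl_compl S
    · intro S _; rfl
  have ht : levelMean μ f (Fintype.card V) = logMean μ f univ := by
    have : powersetCard (Fintype.card V) (univ : Finset V) = {univ} := by
      rw [← card_univ, powersetCard_self]
    rw [levelMean, this]
    simp
  simp only [avgEnt_eq hμ hf]
  rw [Finset.sum_sub_distrib, Finset.sum_const, card_powersetCard, card_univ, nsmul_eq_mul, e,
    mul_sub, inv_mul_cancel_left₀ hc, ht, levelMean, Nat.choose_symm hℓ]

end Averaging

/-! ### Conclusion -/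

/-- **Uniform block factorization of entropy from spectral independence:** a
totally-connected, `b`-marginally bounded and `η`-spectrally independent distribution on
`[q]^V` with `n = |V| ≥ (2/θ)·(4η/b²+1)` satisfies `⌈θn⌉`-uniform block factorization of
entropy with constant `C = (2/θ)^{4η/b²+1}`. -/
theorem block_factorization_of_spectral_independence
    (b η θ : ℝ) (hb0 : 0 < b) (hb1 : b ≤ 1) (hη : 0 < η) (hθ0 : 0 < θ) (hθ1 : θ < 1)
    {V : Type} [Fintype V] [DecidableEq V] {q : ℕ} (hq : 2 ≤ q)
    (hn : (2 / θ) * (4 * η / b ^ 2 + 1) ≤ (Fintype.card V : ℝ))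
    (μ : (V → Fin q) → ℝ) (hprob : IsProbDist μ)
    (htc : TotallyConnected μ) (hmb : MarginallyBounded μ b)
    (hsi : SpectrallyIndependent μ η) :
    UniformBlockFactorization μ ⌈θ * (Fintype.card V : ℝ)⌉₊
      ((2 / θ) ^ (4 * η / b ^ 2 + 1)) := by
  intro f hf
  set n := Fintype.card V with hnV
  set R := 4 * η / b ^ 2 with hR
  set ℓ := ⌈θ * (n : ℝ)⌉₊ with hℓ
  have hμ := hprob.1
  have hR0 : 0 < R := by positivity
  have hℓ1 : θ * (n : ℝ) ≤ ℓ := Nat.le_ceil _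
  have hℓn : ℓ ≤ n := by
    refine Nat.ceil_le.2 ?_
    nlinarith [(Nat.cast_nonneg n : (0 : ℝ) ≤ n)]
  have hθn : 2 * (R + 1) ≤ θ * n := by
    rw [div_mul_eq_mul_div, div_le_iff₀ hθ0] at hn
    linarith
  have hn0 : (0 : ℝ) < n := by
    by_contra h
    have : (n : ℝ) = 0 := le_antisymm (not_lt.1 h) (Nat.cast_nonneg n)
    rw [this, mul_zero] at hθn
    linarith
  -- `A N` is the average of `μ[Ent_S f]` over the blocks `S` of size `N`.
  have hmain := growth_bound hR0.le hθ0 (n := n) (ℓ := ℓ)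
    (fun N => levelMean μ f n - levelMean μ f (n - N)) (by simp)
    (fun N hN => by
      have := levelMean_mono hμ hf hb0 hb1 hmb (k := n - (N + 1)) (by omega)
      rw [show n - (N + 1) + 1 = n - N by omega] at this
      linarith)
    (fun N hN => by
      have := levelMean_step hμ hf hb0 hb1 hη hmb hsi (k := n - (N + 2)) (by omega)
      rw [show n - (N + 2) + 1 = n - (N + 1) by omega, show n - (N + 2) + 2 = n - N by omega,
        Nat.cast_sub (by omega), ← hnV, ← hR] at this
      push_cast at this
      linarith)
    hℓn hℓ1 (hθn.trans hℓ1)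
  have hent : entropy μ f = levelMean μ f n - levelMean μ f (n - n) := by
    have := avg_avgEnt hμ hf (le_refl (Fintype.card V))
    rw [← this, ← card_univ, powersetCard_self]
    simp [avgEnt_eq hμ hf, entropy_eq hprob hf]
  rw [← hent] at hmain
  have hent0 : 0 ≤ entropy μ f := by
    have hm : ∀ k ≤ n, levelMean μ f 0 ≤ levelMean μ f k := by
      intro k
      induction k with
      | zero => intro _; exact le_rfl
      | succ k ih =>
        intro hk
        exact (ih (by omega)).trans (levelMean_mono hμ hf hb0 hb1 hmb hk)
    rw [hent, Nat.sub_self]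
    exact sub_nonneg.2 (hm n le_rfl)
  rw [mul_assoc, avg_avgEnt hμ hf hℓn]
  have hfrac : (ℓ : ℝ) / n ≤ 1 := (div_le_one hn0).2 (by exact_mod_cast hℓn)
  calc (ℓ : ℝ) / n * entropy μ f ≤ 1 * entropy μ f := mul_le_mul_of_nonneg_right hfrac hent0
    _ ≤ _ := by rw [one_mul]; exact hmain
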